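/- arXiv:1012.2071 — 2 statements merged into one kernel-verified Lean document; each statement's English description precedes it below -/
import Mathlib

section
/- Let n, m be positive integers and Θ a real n×m matrix. Then Θ is multiplicatively badly approximable if and only if its transpose ᵗΘ is multiplicatively badly approximable. -/
open MeasureTheory Filter Matrix

noncomputable section

/-- Geometric mean of the absolute values of the coordinates: Π(z). -/
def Pigeo {k : ℕ} (z : Fin k → ℝ) : ℝ := (∏ i, |z i|) ^ ((1:ℝ)/k)

/-- Geometric mean of `max 1 |z i|`: Π'(z). -/
def Pigeo' {k : ℕ} (z : Fin k → ℝ) : ℝ := (∏ i, max 1 |z i|) ^ ((1:ℝ)/k)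

/-- Coordinatewise cast of an integer vector to a real vector. -/
def ivec {k : ℕ} (x : Fin k → ℤ) : Fin k → ℝ := fun i => (x i : ℝ)

/-- The constant Δ_d = (2^{d-1}√d)⁻¹ · vol_{d-1}{x ∈ [-1,1]^d : x₁+⋯+x_d = 0}. -/
def Delta (d : ℕ) : ℝ :=
  ((2:ℝ) ^ (d - 1) * Real.sqrt d)⁻¹ *
    (μH[(d:ℝ) - 1] {x : EuclideanSpace ℝ (Fin d) | (∀ i, |x i| ≤ 1) ∧ ∑ i, x i = 0}).toReal

/-- Θ (an n×m matrix) is multiplicatively badly approximable. -/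
def MultBad (n m : ℕ) (Θ : Matrix (Fin n) (Fin m) ℝ) : Prop :=
  0 < sInf {c : ℝ | ∃ x : Fin m → ℤ, ∃ y : Fin n → ℤ, x ≠ 0 ∧
    c = Pigeo' (ivec x) ^ m * Pigeo (Θ.mulVec (ivec x) - ivec y) ^ n}

/-!
Suppose that `(u, v)` is an integer point with `u ≠ 0` at which the product attached to `Θᵀ` is
small. Put `w i = max 1 |u i|` and `e = Θᵀ u - v`, and choose `i₀` with `u i₀ ≠ 0`. Among the
integer points `(x, y)` orthogonal to `(v, -u)`, Minkowski's theorem on linear forms finds a nonzero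
one with `|x j| < l j` for all `j` and `w i * |(Θ x - y) i| < t` for all `i ≠ i₀`; the sides
`l j ≥ 1` are chosen with `∏ l j = 2 * t * ∏ w i / t ^ n` and such that `|x j| < l j` forces
`|x j * e j| ≤ t`. Orthogonality means `∑ u i * (Θ x - y) i = ∑ x j * e j`, and this bounds the
remaining error: `w i₀ * |(Θ x - y) i₀| ≤ (n + m) * t`. Multiplying all the bounds, the `w i` cancel
and the product attached to `Θ` at `(x, y)` is at most `2 * (n + m) * t`.
-/

section Minkowski

variable {ι : Type*} [Fintype ι]

/-- Minkowski's theorem on linear forms. -/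
theorem exists_int_ne_zero_abs_mulVec_lt [DecidableEq ι] {M : Matrix ι ι ℝ} (hM : M.det ≠ 0)
    {r : ι → ℝ} (hr : ∀ i, 0 ≤ r i) (h : |M.det| < ∏ i, r i) :
    ∃ z : ι → ℤ, z ≠ 0 ∧ ∀ i, |(M *ᵥ fun k => (z k : ℝ)) i| < r i := by
  let b := (Pi.basisFun ℝ ι).map (Matrix.toLinearEquiv (Pi.basisFun ℝ ι) M hM.isUnit)
  have b_apply (k : ι) : b k = M.col k := by
    simp [b, Matrix.toLinearEquiv, Matrix.toLin_eq_toLin']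
  have covolume : volume (ZSpan.fundamentalDomain b) = ENNReal.ofReal |M.det| := by
    rw [ZSpan.volume_fundamentalDomain, ← Matrix.det_transpose M]
    congr 3
    ext i k
    simp [b_apply]
  have box_volume : volume (Set.univ.pi fun i => Set.Ioo (-r i) (r i)) =
      ENNReal.ofReal (∏ i, r i) * 2 ^ Fintype.card ι := by
    rw [Real.volume_pi_Ioo, ENNReal.ofReal_prod_of_nonneg fun i _ => hr i, mul_comm]
    simp [← two_mul, ENNReal.ofReal_mul, Finset.prod_mul_distrib]
  have volume_lt : volume (ZSpan.fundamentalDomain b) * 2 ^ Module.finrank ℝ (ι → ℝ) <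
      volume (Set.univ.pi fun i => Set.Ioo (-r i) (r i)) := by
    rw [covolume, box_volume, Module.finrank_fintype_fun_eq_card]
    gcongr
    exacts [ENNReal.pow_ne_top ENNReal.ofNat_ne_top,
      (ENNReal.ofReal_lt_ofReal_iff_of_nonneg (abs_nonneg _)).2 h]
  have : Countable (Submodule.span ℤ (Set.range b)).toAddSubgroup :=
    inferInstanceAs (Countable (Submodule.span ℤ (Set.range b)))
  obtain ⟨⟨p, hp⟩, hp0, hpr⟩ := exists_ne_zero_mem_lattice_of_measure_mul_two_pow_lt_measure
    (ZSpan.isAddFundamentalDomain' b volume) (s := Set.univ.pi fun i => Set.Ioo (-r i) (r i))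
    (fun x hx i _ => by simpa [and_comm, neg_lt] using hx i trivial)
    (convex_pi fun i _ => convex_Ioo _ _) volume_lt
  obtain ⟨z, rfl⟩ := (Submodule.mem_span_range_iff_exists_fun ℤ).1 hp
  have hz : M *ᵥ (fun k => (z k : ℝ)) = ∑ k, z k • b k := by
    ext i
    simp [Matrix.mulVec, dotProduct, b_apply, mul_comm]
  refine ⟨z, ?_, fun i => ?_⟩
  · rintro rfl
    simp at hp0
  · rw [hz, abs_lt]
    exact hpr i trivial

end Minkowski

section Products

variable {ι κ : Type*} [Fintype ι] [Fintype κ]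

theorem exists_pos_prod_add_lt (c : κ → ℝ) {ε a b : ℝ} (hε : 0 < ε) (h : a * ∏ j, c j < b) :
    ∃ s, 0 < s ∧ s ≤ ε ∧ a * ∏ j, (c j + s) < b := by
  have hcont : Continuous fun s : ℝ => a * ∏ j, (c j + s) := by fun_prop
  have hlt : ∀ᶠ s in nhdsWithin (0 : ℝ) (Set.Ioi 0), a * ∏ j, (c j + s) < b :=
    (hcont.continuousAt.eventually_lt continuousAt_const (by simpa using h)).filter_mono
      nhdsWithin_le_nhds
  obtain ⟨s, hs, hs0, hsε⟩ := (hlt.and (Ioc_mem_nhdsGT hε)).exists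
  exact ⟨s, hs0, hsε, hs⟩

/-- The product of `max 1 (t / (c j + s))` takes the value `L` for some `s > 0`; the shift by `s`
copes with vanishing `c j`. -/
theorem exists_one_le_prod_eq {c : κ → ℝ} (hc : ∀ j, 0 ≤ c j) {t L : ℝ} (ht : 0 < t)
    (hL : 1 ≤ L) (h : L * ∏ j, c j < t ^ Fintype.card κ) :
    ∃ l : κ → ℝ, (∀ j, 1 ≤ l j) ∧ (∀ j, l j = 1 ∨ l j * c j ≤ t) ∧ ∏ j, l j = L := by
  obtain ⟨s₀, hs₀, hs₀t, hlt⟩ := exists_pos_prod_add_lt c ht h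
  have hpos {s : ℝ} (hs : 0 < s) (j : κ) : 0 < c j + s := add_pos_of_nonneg_of_pos (hc j) hs
  have hcont : ContinuousOn (fun s => ∏ j, max 1 (t / (c j + s))) (Set.Icc s₀ t) :=
    continuousOn_finsetProd _ fun j _ => continuousOn_const.sup <|
      continuousOn_const.div (by fun_prop) fun s hs => (hpos (hs₀.trans_le hs.1) j).ne'
  have hupper : L ≤ ∏ j, max 1 (t / (c j + s₀)) :=
    calc L ≤ t ^ Fintype.card κ / ∏ j, (c j + s₀) :=
          (le_div_iff₀ (Finset.prod_pos fun j _ => hpos hs₀ j)).2 hlt.le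
      _ = ∏ j, t / (c j + s₀) := by simp [Finset.prod_div_distrib]
      _ ≤ _ := Finset.prod_le_prod (fun j _ => (div_pos ht (hpos hs₀ j)).le)
          fun j _ => le_max_right _ _
  have hlower : ∏ j, max 1 (t / (c j + t)) ≤ L := by
    refine (Finset.prod_eq_one fun j _ => max_eq_left ?_).trans_le hL
    exact (div_le_one (hpos ht j)).2 (by linarith [hc j])
  obtain ⟨s, ⟨hs, -⟩, rfl⟩ := intermediate_value_Icc' hs₀t hcont ⟨hlower, hupper⟩
  have hs0 : 0 < s := hs₀.trans_le hs
  refine ⟨_, fun j => le_max_left _ _, fun j => ?_, rfl⟩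
  refine (max_choice 1 (t / (c j + s))).imp id fun hmax => ?_
  rw [hmax, div_mul_eq_mul_div, div_le_iff₀ (hpos hs0 j)]
  gcongr
  linarith

variable {R : Type*} [CommRing R] [LinearOrder R] [IsStrictOrderedRing R]

theorem abs_le_of_sum_eq_sum {f : ι → R} {g : κ → R} (h : ∑ i, f i = ∑ j, g j) {t : R}
    (ht : 0 ≤ t) (i₀ : ι) (hf : ∀ i, i ≠ i₀ → |f i| ≤ t) (hg : ∀ j, |g j| ≤ t) :
    |f i₀| ≤ (Fintype.card ι + Fintype.card κ) * t := by
  classical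
  have hrest : |∑ i ∈ Finset.univ.erase i₀, f i| ≤ Fintype.card ι * t :=
    calc _ ≤ ∑ i ∈ Finset.univ.erase i₀, |f i| := Finset.abs_sum_le_sum_abs _ _
      _ ≤ ∑ _i ∈ Finset.univ.erase i₀, t :=
          Finset.sum_le_sum fun i hi => hf i (Finset.ne_of_mem_erase hi)
      _ ≤ ∑ _i : ι, t :=
          Finset.sum_le_sum_of_subset_of_nonneg (Finset.subset_univ _) fun _ _ _ => ht
      _ = _ := by simp
  have hsum : |∑ j, g j| ≤ Fintype.card κ * t :=
    calc _ ≤ ∑ j, |g j| := Finset.abs_sum_le_sum_abs _ _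
      _ ≤ ∑ _j : κ, t := Finset.sum_le_sum fun j _ => hg j
      _ = _ := by simp
  calc |f i₀| = |∑ j, g j - ∑ i ∈ Finset.univ.erase i₀, f i| := by
        rw [← h, ← Finset.add_sum_erase _ _ (Finset.mem_univ i₀), add_sub_cancel_right]
    _ ≤ |∑ j, g j| + |∑ i ∈ Finset.univ.erase i₀, f i| := abs_sub _ _
    _ ≤ _ := by linarith

theorem prod_le_mul_pow_card {f : ι → R} (hf : ∀ i, 0 ≤ f i) {t C : R} (i₀ : ι)
    (h₀ : f i₀ ≤ C * t) (h : ∀ i, i ≠ i₀ → f i ≤ t) : ∏ i, f i ≤ C * t ^ Fintype.card ι := by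
  classical
  have hrest : ∏ i ∈ Finset.univ.erase i₀, f i ≤ t ^ (Fintype.card ι - 1) :=
    calc _ ≤ ∏ _i ∈ Finset.univ.erase i₀, t :=
          Finset.prod_le_prod (fun i _ => hf i) fun i hi => h i (Finset.ne_of_mem_erase hi)
      _ = _ := by simp [Finset.card_erase_of_mem]
  calc ∏ i, f i = f i₀ * ∏ i ∈ Finset.univ.erase i₀, f i :=
        (Finset.mul_prod_erase _ _ (Finset.mem_univ i₀)).symm
    _ ≤ C * t * t ^ (Fintype.card ι - 1) :=
        mul_le_mul h₀ hrest (Finset.prod_nonneg fun i _ => hf i) ((hf i₀).trans h₀)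
    _ = C * t ^ Fintype.card ι := by
        rw [mul_assoc, mul_pow_sub_one (Fintype.card_pos_iff.2 ⟨i₀⟩).ne']

theorem abs_intCast_mul_le {k : ℤ} {l c t : R} (hk : |(k : R)| < l) (hc : 0 ≤ c) (ht : 0 ≤ t)
    (h : l = 1 ∨ l * c ≤ t) : |(k : R)| * c ≤ t := by
  rcases h with rfl | h
  · have hk0 : k = 0 := Int.abs_lt_one_iff.1 (by exact_mod_cast hk)
    simpa [hk0] using ht
  · exact (mul_le_mul_of_nonneg_right hk.le hc).trans h

end Products

section Transference

variable {ι κ : Type*} [Fintype κ]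

/-- The error `Θx - y` of the simultaneous approximation given by an integer point `(x, y)`. -/
def approxError (Θ : Matrix ι κ ℝ) (x : κ → ℤ) (y : ι → ℤ) : ι → ℝ :=
  Θ *ᵥ (fun j => (x j : ℝ)) - fun i => (y i : ℝ)

theorem eq_zero_of_abs_approxError_zero_lt_one {Θ : Matrix ι κ ℝ} {y : ι → ℤ}
    (h : ∀ i, |approxError Θ 0 y i| < 1) : y = 0 := by
  ext i
  have hi : |(y i : ℝ)| < 1 := by simpa [approxError, Matrix.mulVec, dotProduct] using h i
  exact Int.abs_lt_one_iff.1 (by exact_mod_cast hi)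

variable [Fintype ι]

/-- The product `Π'(x)^m Π(Θx - y)^n`, with the roots contained in `Π'` and `Π` cancelled
against the exponents. -/
def approxProduct (Θ : Matrix ι κ ℝ) (x : κ → ℤ) (y : ι → ℤ) : ℝ :=
  (∏ j, max 1 |(x j : ℝ)|) * ∏ i, |approxError Θ x y i|

theorem approxProduct_nonneg (Θ : Matrix ι κ ℝ) (x : κ → ℤ) (y : ι → ℤ) :
    0 ≤ approxProduct Θ x y := by
  unfold approxProduct
  positivity

theorem sum_mul_approxError_eq (Θ : Matrix ι κ ℝ) {x : κ → ℤ} {y u : ι → ℤ} {v : κ → ℤ}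
    (h : v ⬝ᵥ x = u ⬝ᵥ y) :
    ∑ i, u i * approxError Θ x y i = ∑ j, x j * approxError Θᵀ u v j := by
  have hint : (fun i => (u i : ℝ)) ⬝ᵥ (fun i => (y i : ℝ)) =
      (fun j => (x j : ℝ)) ⬝ᵥ fun j => (v j : ℝ) := by
    rw [dotProduct_comm v x] at h
    simpa [dotProduct] using congrArg (Int.cast : ℤ → ℝ) h.symm
  change (fun i => (u i : ℝ)) ⬝ᵥ approxError Θ x y =
    (fun j => (x j : ℝ)) ⬝ᵥ approxError Θᵀ u v
  rw [approxError, approxError, dotProduct_sub, dotProduct_sub, hint, Matrix.mulVec_transpose,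
    Matrix.dotProduct_mulVec, dotProduct_comm (_ ᵥ* Θ)]

/-- The linear form `v ⬝ᵥ x - u ⬝ᵥ y` takes the place of the `i₀`-th error in Minkowski's theorem;
it is integral, so the bound `1` makes it vanish. -/
theorem exists_int_dotProduct_eq_abs_approxError_lt [DecidableEq ι] (Θ : Matrix ι κ ℝ) {u : ι → ℤ}
    (v : κ → ℤ) {i₀ : ι} (hu : u i₀ ≠ 0) {l : κ → ℝ} {r : ι → ℝ} (hl : ∀ j, 0 ≤ l j)
    (hr : ∀ i, 0 ≤ r i) (h : |(u i₀ : ℝ)| < (∏ j, l j) * ∏ i ∈ Finset.univ.erase i₀, r i) :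
    ∃ (x : κ → ℤ) (y : ι → ℤ), (x = 0 → y ≠ 0) ∧ v ⬝ᵥ x = u ⬝ᵥ y ∧
      (∀ j, |(x j : ℝ)| < l j) ∧ ∀ i, i ≠ i₀ → |approxError Θ x y i| < r i := by
  classical
  let C : Matrix ι κ ℝ := Θ.updateRow i₀ fun j => (v j : ℝ)
  let D : Matrix ι ι ℝ := -((1 : Matrix ι ι ℝ).updateRow i₀ fun i => (u i : ℝ))
  let M : Matrix (κ ⊕ ι) (κ ⊕ ι) ℝ := Matrix.fromBlocks 1 0 C D
  have hdet : |M.det| = |(u i₀ : ℝ)| := by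
    rw [Matrix.det_fromBlocks_zero₁₂, Matrix.det_one, Matrix.det_neg,
      ← Matrix.cramer_transpose_apply, Matrix.transpose_one, Matrix.cramer_one]
    simp [abs_mul]
  have hbox : |M.det| < ∏ k, Sum.elim l (Function.update r i₀ 1) k := by
    rw [hdet, Fintype.prod_sum_type]
    simpa [Finset.prod_update_of_mem, Finset.sdiff_singleton_eq_erase] using h
  have hdet_ne : M.det ≠ 0 := abs_pos.1 (hdet ▸ abs_pos.2 (Int.cast_ne_zero.2 hu))
  have hsides : ∀ k, 0 ≤ Sum.elim l (Function.update r i₀ 1) k := by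
    rintro (j | i)
    · exact hl j
    · rcases eq_or_ne i i₀ with rfl | hi <;> simp [*]
  obtain ⟨z, hz, hzr⟩ := exists_int_ne_zero_abs_mulVec_lt hdet_ne hsides hbox
  refine ⟨z ∘ Sum.inl, z ∘ Sum.inr, fun hx hy => hz ?_, ?_, fun j => ?_, fun i hi => ?_⟩
  · ext (j | i)
    exacts [congrFun hx j, congrFun hy i]
  · have hform : |((v ⬝ᵥ z ∘ Sum.inl - u ⬝ᵥ z ∘ Sum.inr : ℤ) : ℝ)| < 1 := by
      simpa [M, C, D, Matrix.mulVec, dotProduct, sub_eq_add_neg] using hzr (Sum.inr i₀)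
    exact sub_eq_zero.1 (Int.abs_lt_one_iff.1 (by exact_mod_cast hform))
  · simpa [M, Matrix.mulVec, dotProduct, Matrix.one_apply] using hzr (Sum.inl j)
  · simpa [M, C, D, approxError, Matrix.mulVec, dotProduct, hi, Matrix.one_apply, sub_eq_add_neg]
      using hzr (Sum.inr i)

theorem exists_int_max_mul_abs_approxError_le (Θ : Matrix ι κ ℝ) {u : ι → ℤ} (v : κ → ℤ)
    (hu : u ≠ 0) {l : κ → ℝ} {t : ℝ} (ht : 0 < t) (hl : ∀ j, 0 ≤ l j)
    (hlt : ∀ j, l j = 1 ∨ l j * |approxError Θᵀ u v j| ≤ t)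
    (h : t * ∏ i, max 1 |(u i : ℝ)| < (∏ j, l j) * t ^ Fintype.card ι) :
    ∃ (x : κ → ℤ) (y : ι → ℤ), (x = 0 → y ≠ 0) ∧ (∀ j, |(x j : ℝ)| < l j) ∧
      (∀ i, max 1 |(u i : ℝ)| * |approxError Θ x y i| ≤
        (Fintype.card ι + Fintype.card κ) * t) ∧
      ∏ i, max 1 |(u i : ℝ)| * |approxError Θ x y i| ≤
        (Fintype.card ι + Fintype.card κ) * t ^ Fintype.card ι := by
  classical
  obtain ⟨i₀, hi₀ : u i₀ ≠ 0⟩ := Function.ne_iff.1 hu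
  have hw (i : ι) : 0 < max 1 |(u i : ℝ)| := by positivity
  have hwi₀ : max 1 |(u i₀ : ℝ)| = |(u i₀ : ℝ)| :=
    max_eq_right (by exact_mod_cast Int.one_le_abs hi₀)
  have hvol : |(u i₀ : ℝ)| <
      (∏ j, l j) * ∏ i ∈ Finset.univ.erase i₀, t / max 1 |(u i : ℝ)| := by
    rw [← hwi₀, ← mul_lt_mul_iff_right₀ (div_pos ht (hw i₀)), mul_left_comm,
      Finset.mul_prod_erase _ (fun i => t / max 1 |(u i : ℝ)|) (Finset.mem_univ i₀),
      Finset.prod_div_distrib, div_mul_cancel₀ _ (hw i₀).ne', ← mul_div_assoc,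
      lt_div_iff₀ (Finset.prod_pos fun i _ => hw i)]
    simpa using h
  obtain ⟨x, y, hxy, hdot, hx, hy⟩ := exists_int_dotProduct_eq_abs_approxError_lt Θ v hi₀ hl
    (fun i => (div_pos ht (hw i)).le) hvol
  have hne (i : ι) (hi : i ≠ i₀) : max 1 |(u i : ℝ)| * |approxError Θ x y i| ≤ t :=
    (le_div_iff₀' (hw i)).1 (hy i hi).le
  have hpairing : |u i₀ * approxError Θ x y i₀| ≤ (Fintype.card ι + Fintype.card κ) * t := by
    refine abs_le_of_sum_eq_sum (sum_mul_approxError_eq Θ hdot) ht.le i₀ (fun i hi => ?_)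
      fun j => ?_
    · rw [abs_mul]
      exact (mul_le_mul_of_nonneg_right (le_max_right _ _) (abs_nonneg _)).trans (hne i hi)
    · rw [abs_mul]
      exact abs_intCast_mul_le (hx j) (abs_nonneg _) ht.le (hlt j)
  rw [abs_mul, ← hwi₀] at hpairing
  have hcard : (1 : ℝ) ≤ Fintype.card ι + Fintype.card κ := by
    have : Nonempty ι := ⟨i₀⟩
    exact_mod_cast Nat.le_add_right_of_le Fintype.card_pos
  refine ⟨x, y, hxy, hx, fun i => ?_,
    prod_le_mul_pow_card (fun i => by positivity) i₀ hpairing hne⟩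
  rcases eq_or_ne i i₀ with rfl | hi
  · exact hpairing
  · exact (hne i hi).trans (le_mul_of_one_le_left ht.le hcard)

theorem exists_approxProduct_le_of_transpose (Θ : Matrix ι κ ℝ) {u : ι → ℤ} {v : κ → ℤ}
    (hu : u ≠ 0) {t : ℝ} (ht : 0 < t) (ht₁ : (Fintype.card ι + Fintype.card κ) * t < 1)
    (h : 2 * t * approxProduct Θᵀ u v < t ^ (Fintype.card ι + Fintype.card κ)) :
    ∃ (x : κ → ℤ) (y : ι → ℤ), x ≠ 0 ∧
      approxProduct Θ x y ≤ 2 * (Fintype.card ι + Fintype.card κ) * t := by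
  set n := Fintype.card ι
  set m := Fintype.card κ
  set W := ∏ i, max 1 |(u i : ℝ)|
  have hW : 1 ≤ W := Finset.one_le_prod fun i _ => le_max_left _ _
  have hn : 0 < n := Fintype.card_pos_iff.2 ((Function.ne_iff.1 hu).nonempty)
  have hcard : (1 : ℝ) ≤ n + m := by exact_mod_cast Nat.le_add_right_of_le hn
  have htn : t ^ n ≤ t :=
    pow_le_of_le_one ht.le ((le_mul_of_one_le_left ht.le hcard).trans ht₁.le) hn.ne'
  have hL : 1 ≤ 2 * t * W / t ^ n := (one_le_div (by positivity)).2 (by nlinarith)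
  have hcap : 2 * t * W / t ^ n * ∏ j, |approxError Θᵀ u v j| < t ^ m := by
    rw [div_mul_eq_mul_div, div_lt_iff₀ (by positivity), mul_assoc, ← pow_add, add_comm m]
    exact h
  obtain ⟨l, hl, hlt, hprod⟩ := exists_one_le_prod_eq (fun j => abs_nonneg _) ht hL hcap
  have hvol : t * W < (∏ j, l j) * t ^ n := by
    rw [hprod, div_mul_cancel₀ _ (by positivity), mul_assoc]
    linarith [mul_pos ht (zero_lt_one.trans_le hW)]
  obtain ⟨x, y, hxy, hx, herr, herr_prod⟩ := exists_int_max_mul_abs_approxError_le Θ v hu ht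
    (fun j => zero_le_one.trans (hl j)) hlt hvol
  refine ⟨x, y, ?_, ?_⟩
  · rintro rfl
    refine hxy rfl (eq_zero_of_abs_approxError_zero_lt_one (Θ := Θ) fun i => ?_)
    exact (le_mul_of_one_le_left (abs_nonneg _) (le_max_left _ _)).trans_lt
      ((herr i).trans_lt ht₁)
  · have hE : ∏ i, |approxError Θ x y i| ≤ (n + m) * t ^ n / W := by
      rwa [le_div_iff₀' (by positivity), ← Finset.prod_mul_distrib]
    have hX : ∏ j, max 1 |(x j : ℝ)| ≤ 2 * t * W / t ^ n := by
      rw [← hprod]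
      exact Finset.prod_le_prod (fun j _ => by positivity) fun j _ => max_le (hl j) (hx j).le
    calc approxProduct Θ x y ≤ 2 * t * W / t ^ n * ((n + m) * t ^ n / W) :=
          mul_le_mul hX hE (by positivity) (by positivity)
      _ = 2 * (n + m) * t := by field_simp

end Transference

theorem pigeo_pow {k : ℕ} (z : Fin k → ℝ) : Pigeo z ^ k = ∏ i, |z i| := by
  rcases k.eq_zero_or_pos with rfl | hk
  · simp
  · rw [Pigeo, one_div, Real.rpow_inv_natCast_pow (by positivity) hk.ne']

theorem pigeo'_pow {k : ℕ} (z : Fin k → ℝ) : Pigeo' z ^ k = ∏ i, max 1 |z i| := by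
  rcases k.eq_zero_or_pos with rfl | hk
  · simp
  · rw [Pigeo', one_div, Real.rpow_inv_natCast_pow (by positivity) hk.ne']

theorem multBad_iff_sInf_approxProduct_pos {n m : ℕ} {Θ : Matrix (Fin n) (Fin m) ℝ} :
    MultBad n m Θ ↔ 0 < sInf {c | ∃ x y, x ≠ 0 ∧ c = approxProduct Θ x y} := by
  simp only [MultBad, pigeo_pow, pigeo'_pow]
  rfl

theorem MultBad.exists_pos_le_approxProduct {n m : ℕ} {Θ : Matrix (Fin n) (Fin m) ℝ}
    (h : MultBad n m Θ) : ∃ c, 0 < c ∧ ∀ x y, x ≠ 0 → c ≤ approxProduct Θ x y := by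
  refine ⟨_, multBad_iff_sInf_approxProduct_pos.1 h,
    fun x y hx => csInf_le ⟨0, ?_⟩ ⟨x, y, hx, rfl⟩⟩
  rintro _ ⟨x, y, -, rfl⟩
  exact approxProduct_nonneg Θ x y

theorem multBad_of_le_approxProduct {n m : ℕ} (hm : 0 < m) {Θ : Matrix (Fin n) (Fin m) ℝ} {c : ℝ}
    (hc : 0 < c) (h : ∀ x y, x ≠ 0 → c ≤ approxProduct Θ x y) : MultBad n m Θ := by
  have : NeZero m := ⟨hm.ne'⟩
  refine multBad_iff_sInf_approxProduct_pos.2 <|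
    hc.trans_le (le_csInf ⟨_, 1, 0, one_ne_zero, rfl⟩ ?_)
  rintro _ ⟨x, y, hx, rfl⟩
  exact h x y hx

theorem MultBad.transpose {n m : ℕ} (hn : 0 < n) {Θ : Matrix (Fin n) (Fin m) ℝ}
    (h : MultBad n m Θ) : MultBad m n Θᵀ := by
  obtain ⟨c, hc, h⟩ := h.exists_pos_le_approxProduct
  obtain ⟨ε, hε, hε_lt⟩ := exists_between (lt_min hc one_pos)
  obtain ⟨hεc, hε1⟩ := lt_min_iff.1 hε_lt
  obtain ⟨t, ht, htε⟩ : ∃ t : ℝ, 0 < t ∧ 2 * (n + m) * t = ε :=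
    ⟨ε / (2 * (n + m)), by positivity, by field_simp⟩
  refine multBad_of_le_approxProduct hn (c := t ^ (n + m) / (2 * t)) (by positivity)
    fun u v hu => ?_
  by_contra! hlt
  rw [lt_div_iff₀' (by positivity)] at hlt
  obtain ⟨x, y, hx, hle⟩ := exists_approxProduct_le_of_transpose Θ hu ht
    (by simp only [Fintype.card_fin]; linarith) (by simpa only [Fintype.card_fin] using hlt)
  simp only [Fintype.card_fin] at hle
  linarith [h x y hx]

/-- Corollary 1: Θ is multiplicatively badly approximable iff ᵗΘ is. -/
theorem multBad_transpose_iff (n m : ℕ) (hn : 0 < n) (hm : 0 < m)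
    (Θ : Matrix (Fin n) (Fin m) ℝ) :
    MultBad n m Θ ↔ MultBad m n Θᵀ :=
  ⟨fun h => h.transpose hn, fun h => h.transpose hm⟩
end
end

section
/- Let α, β be real numbers, set c = √3/2, and let ρ denote the inverse function of t ↦ c·t²·√(log(1+t)) on ℝ₊. If there are infinitely many pairs (p,q) ∈ ℤ² \ {(0,0)} such that ‖pα + qβ‖ ≤ 1/(t²·log(1+t)) with t = √(max(1,|p|)·max(1,|q|)), then there are infinitely many positive integers q such that ‖qα‖·‖qβ‖ ≤ c² / (ρ(q)²·log(1+ρ(q))). -/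
noncomputable section

/-- Distance from a real number to the nearest integer. -/
def nint (x : ℝ) : ℝ := |x - (round x : ℤ)|

/-!
Let `m` be the integer nearest to `p α + q β`. The integer vectors `(n, a, b)` with
`n m = p a + q b` form a plane lattice. Put `X = n α - a` and `Y = n β - b`, so that
`p X + q Y = n (p α + q β - m)` is small. Hermite's theorem gives a nonzero vector of this lattice
for which `n` and `p X - q Y` are both under control, and
`4 p q X Y = (p X + q Y) ^ 2 - (p X - q Y) ^ 2` then bounds `‖n α‖ ‖n β‖`.
If the products so obtained are all nonzero, they tend to `0` and infinitely many `n` occur;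
if one of them vanishes, the multiples of that `n` are solutions.
-/

open Filter

section NearestInteger

lemma nint_eq_norm (x : ℝ) : nint x = ‖(x : UnitAddCircle)‖ := UnitAddCircle.norm_eq.symm

lemma nint_nonneg (x : ℝ) : 0 ≤ nint x := abs_nonneg _

lemma nint_natCast_mul_le (k : ℕ) (x : ℝ) : nint (k * x) ≤ k * nint x := by
  rw [nint_eq_norm, nint_eq_norm, ← nsmul_eq_mul, AddCircle.coe_nsmul]
  exact norm_nsmul_le

lemma nint_natAbs_mul (n : ℤ) (x : ℝ) : nint (n.natAbs * x) = nint (n * x) := by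
  rw [Nat.cast_natAbs, Int.cast_abs]
  rcases abs_choice (n : ℝ) with h | h
  · rw [h]
  · rw [h, neg_mul, nint_eq_norm, AddCircle.coe_neg, norm_neg, nint_eq_norm]

/-- The product `‖nα‖ · ‖nβ‖` of Littlewood's conjecture. -/
def littlewoodProduct (α β : ℝ) (n : ℕ) : ℝ := nint (n * α) * nint (n * β)

lemma littlewoodProduct_nonneg (α β : ℝ) (n : ℕ) : 0 ≤ littlewoodProduct α β n :=
  mul_nonneg (nint_nonneg _) (nint_nonneg _)

lemma littlewoodProduct_comm (α β : ℝ) (n : ℕ) :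
    littlewoodProduct α β n = littlewoodProduct β α n :=
  mul_comm _ _

lemma littlewoodProduct_natAbs (α β : ℝ) (n : ℤ) :
    littlewoodProduct α β n.natAbs = nint (n * α) * nint (n * β) := by
  rw [littlewoodProduct, nint_natAbs_mul, nint_natAbs_mul]

lemma littlewoodProduct_mul_le (α β : ℝ) (k n : ℕ) :
    littlewoodProduct α β (k * n) ≤ k ^ 2 * littlewoodProduct α β n := by
  have nint_le (x : ℝ) : nint ((k * n : ℕ) * x) ≤ k * nint (n * x) := by
    rw [Nat.cast_mul, mul_assoc]
    exact nint_natCast_mul_le k _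
  calc littlewoodProduct α β (k * n)
      ≤ k * nint (n * α) * (k * nint (n * β)) :=
        mul_le_mul (nint_le α) (nint_le β) (nint_nonneg _)
          (mul_nonneg k.cast_nonneg (nint_nonneg _))
    _ = k ^ 2 * littlewoodProduct α β n := by rw [littlewoodProduct]; ring

lemma infinite_setOf_littlewoodProduct_le {α β : ℝ} {g : ℕ → ℝ} (hg : ∀ n, 0 < n → 0 ≤ g n)
    (h : ∀ ε > 0, ∃ n, 0 < n ∧ littlewoodProduct α β n ≤ g n ∧ littlewoodProduct α β n < ε) :
    {n | 0 < n ∧ littlewoodProduct α β n ≤ g n}.Infinite := by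
  by_cases hzero : ∃ n, 0 < n ∧ littlewoodProduct α β n = 0
  · obtain ⟨n, hn, hn0⟩ := hzero
    refine Set.infinite_of_forall_exists_gt fun k ↦ ⟨(k + 1) * n, ⟨by positivity, ?_⟩, ?_⟩
    · calc littlewoodProduct α β ((k + 1) * n) ≤ _ := littlewoodProduct_mul_le α β (k + 1) n
        _ = 0 := by rw [hn0, mul_zero]
        _ ≤ g ((k + 1) * n) := hg _ (by positivity)
    · exact k.lt_succ_self.trans_le (Nat.le_mul_of_pos_right _ hn)
  · intro hfin
    obtain ⟨n₁, hn₁, hn₁g, -⟩ := h 1 one_pos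
    obtain ⟨n₀, ⟨hn₀, -⟩, hmin⟩ :=
      Set.exists_min_image _ (littlewoodProduct α β) hfin ⟨n₁, hn₁, hn₁g⟩
    have hpos : 0 < littlewoodProduct α β n₀ :=
      (littlewoodProduct_nonneg α β n₀).lt_of_ne fun h0 ↦ hzero ⟨n₀, hn₀, h0.symm⟩
    obtain ⟨n, hn, hng, hlt⟩ := h _ hpos
    exact (hmin n ⟨hn, hng⟩).not_gt hlt

end NearestInteger

section ShortVectors

open UpperHalfPlane in
lemma exists_isCoprime_normSq_le (τ : ℍ) :
    ∃ k l : ℤ, IsCoprime k l ∧ √3 * Complex.normSq (k * τ + l) ≤ 2 * τ.im := by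
  obtain ⟨γ, hγ⟩ := ModularGroup.exists_smul_mem_fd τ
  refine ⟨γ 1 0, γ 1 1, ModularGroup.bottom_row_coprime γ, ?_⟩
  have him : (γ • τ).im * Complex.normSq (denom γ τ) = τ.im := by
    rw [ModularGroup.im_smul_eq_div_normSq, div_mul_cancel₀ _ (normSq_denom_ne_zero _ τ.im_ne_zero)]
  have hsqrt : √3 ≤ 2 * (γ • τ).im := by
    rw [Real.sqrt_le_left (by have := (γ • τ).im_pos; positivity), mul_pow]
    linarith [ModularGroup.three_le_four_mul_im_sq_of_mem_fd hγ]
  rw [← ModularGroup.denom_apply]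
  calc √3 * Complex.normSq (denom γ τ)
      ≤ 2 * (γ • τ).im * Complex.normSq (denom γ τ) := by
        gcongr
        exact Complex.normSq_nonneg _
    _ = 2 * τ.im := by rw [mul_assoc, him]

/-- Hermite's theorem; the constant `2 / √3` is attained by the hexagonal lattice. -/
lemma exists_isCoprime_sq_add_sq_le {a b c d : ℝ} (hdet : a * d - b * c ≠ 0) :
    ∃ k l : ℤ, IsCoprime k l ∧
      √3 * ((a * k + b * l) ^ 2 + (c * k + d * l) ^ 2) ≤ 2 * |a * d - b * c| := by
  have hN : 0 < b ^ 2 + d ^ 2 := by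
    rcases eq_or_ne b 0 with rfl | hb
    · have hd : d ≠ 0 := by
        rintro rfl
        simp at hdet
      positivity
    · positivity
  set N := b ^ 2 + d ^ 2 with hNdef
  set Δ := a * d - b * c with hΔ
  -- Up to conjugation, `τ` is the quotient of `a + c * I` by `b + d * I`.
  let τ : UpperHalfPlane := .mk ⟨(a * b + c * d) / N, |Δ| / N⟩ (by positivity)
  obtain ⟨k, l, hkl, hle⟩ := exists_isCoprime_normSq_le τ
  refine ⟨k, l, hkl, ?_⟩
  have hnormSq : Complex.normSq (k * τ + l)
      = (k * ((a * b + c * d) / N) + l) ^ 2 + (k * (|Δ| / N)) ^ 2 := by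
    simp [τ, Complex.normSq_apply, sq]
  have hform : (a * k + b * l) ^ 2 + (c * k + d * l) ^ 2 = N * Complex.normSq (k * τ + l) := by
    rw [hnormSq, mul_pow (k : ℝ), div_pow, sq_abs]
    field_simp
    rw [hNdef, hΔ]
    ring
  calc √3 * ((a * k + b * l) ^ 2 + (c * k + d * l) ^ 2)
      = N * (√3 * Complex.normSq (k * τ + l)) := by rw [hform]; ring
    _ ≤ N * (2 * (|Δ| / N)) := mul_le_mul_of_nonneg_left hle hN.le
    _ = 2 * |Δ| := by field_simp

lemma exists_eq_mul_isCoprime {p q : ℤ} (h : p ≠ 0 ∨ q ≠ 0) :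
    ∃ d p' q' : ℤ, d ≠ 0 ∧ IsCoprime p' q' ∧ p = d * p' ∧ q = d * q' := by
  have hgcd : 0 < Int.gcd p q := Int.gcd_pos_iff.mpr h
  obtain ⟨p', q', hco, hp, hq⟩ := Int.exists_gcd_one hgcd
  exact ⟨Int.gcd p q, p', q', by exact_mod_cast hgcd.ne', Int.isCoprime_iff_gcd_eq_one.mpr hco,
    by rwa [mul_comm], by rwa [mul_comm]⟩

lemma exists_short_vector_of_mul_eq (p q m : ℤ) (u v w ν : ℝ) (hν : ν ≠ 0)
    (hpq : p * w - q * v ≠ 0) :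
    ∃ n a b : ℤ, (n, a, b) ≠ 0 ∧ n * m = p * a + q * b ∧
      √3 * ((u * n + v * a + w * b) ^ 2 + (ν * n) ^ 2) ≤ 2 * |ν * (p * w - q * v)| := by
  have hpq0 : p ≠ 0 ∨ q ≠ 0 := by
    by_contra! h0
    simp [h0.1, h0.2] at hpq
  obtain ⟨d, p', q', hd, hco, rfl, rfl⟩ := exists_eq_mul_isCoprime hpq0
  have hpq' : p' ≠ 0 ∨ q' ≠ 0 := hco.ne_zero_or_ne_zero
  obtain ⟨x, y, hxy⟩ := hco
  -- A basis of the lattice is `(d, m * x, m * y)`, `(0, -q', p')`.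
  have hdet : (u * d + v * (m * x) + w * (m * y)) * 0 - (w * p' - v * q') * (ν * d)
      = -(ν * ((d * p' : ℤ) * w - (d * q' : ℤ) * v)) := by
    push_cast
    ring
  obtain ⟨k, l, hkl, hle⟩ := exists_isCoprime_sq_add_sq_le
    (hdet ▸ neg_ne_zero.mpr (mul_ne_zero hν hpq))
  refine ⟨d * k, k * m * x - l * q', k * m * y + l * p', ?_, ?_, ?_⟩
  · intro h0
    simp only [Prod.mk_eq_zero, mul_eq_zero, hd, false_or] at h0
    obtain ⟨rfl, ha, hb⟩ := h0
    have hl : l ≠ 0 := hkl.ne_zero_or_ne_zero.resolve_left (by simp)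
    simp only [zero_mul, zero_sub, neg_eq_zero, zero_add, mul_eq_zero, hl, false_or] at ha hb
    exact hpq'.elim (· hb) (· ha)
  · linear_combination (-(d * k * m)) * hxy
  · rw [hdet, abs_neg] at hle
    refine le_of_eq_of_le ?_ hle
    push_cast
    ring

end ShortVectors

section Transference

/-- `IsLittlewoodWitness α β H s n` says that `n` is of size `O(H s)` and that `n ‖nα‖ ‖nβ‖` is
`O(1 / s)`, with explicit constants. This is what the transference produces from a pair `(p, q)`
of height `H` with `‖pα + qβ‖ ≤ 1 / (H s²)`. -/
structure IsLittlewoodWitness (α β H s : ℝ) (n : ℕ) : Prop where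
  pos : 0 < n
  sqrt_three_mul_le : √3 * n ≤ 2 * (H * s)
  mul_littlewoodProduct_le : n * littlewoodProduct α β n * s ≤ 4 / 9

variable {α β s : ℝ}

lemma IsLittlewoodWitness.swap {H : ℝ} {n : ℕ} (h : IsLittlewoodWitness α β H s n) :
    IsLittlewoodWitness β α H s n :=
  ⟨h.pos, h.sqrt_three_mul_le, littlewoodProduct_comm α β n ▸ h.mul_littlewoodProduct_le⟩

lemma IsLittlewoodWitness.littlewoodProduct_lt {H ε : ℝ} {n : ℕ}
    (h : IsLittlewoodWitness α β H s n) (hε : 0 < ε) (hs : 1 / ε < s) :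
    littlewoodProduct α β n < ε := by
  have hs0 : 0 < s := (by positivity : 0 < 1 / ε).trans hs
  have hn : (1 : ℝ) ≤ n := by exact_mod_cast h.pos
  refine lt_of_mul_lt_mul_right ?_ hs0.le
  calc littlewoodProduct α β n * s ≤ n * littlewoodProduct α β n * s := by
        gcongr
        exact le_mul_of_one_le_left (littlewoodProduct_nonneg α β n) hn
    _ ≤ 4 / 9 := h.mul_littlewoodProduct_le
    _ < 1 := by norm_num
    _ < ε * s := by rwa [div_lt_iff₀' hε] at hs

lemma mul_abs_sq_sub_sq_le {A z w : ℝ} (hA : 0 ≤ A) (hz : z ^ 2 + 3 * A ^ 2 ≤ 4)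
    (hw : |w| ≤ A) : A * |w ^ 2 - z ^ 2| ≤ 16 / 9 := by
  have hwA : w ^ 2 ≤ A ^ 2 := sq_le_sq.mpr (by rwa [abs_of_nonneg hA])
  have hdiff : |w ^ 2 - z ^ 2| ≤ max (A ^ 2) (4 - 3 * A ^ 2) := by
    rw [abs_le, le_max_iff, neg_le, le_max_iff]
    constructor
    · right; linarith [sq_nonneg w]
    · left; linarith [sq_nonneg z]
  have hcube : A * A ^ 2 ≤ 16 / 9 := by nlinarith [sq_nonneg z, sq_nonneg (A - 7 / 6)]
  -- `A * (4 - 3 * A ^ 2)` is maximal at `A = 2 / 3`.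
  have hcubic : A * (4 - 3 * A ^ 2) ≤ 16 / 9 := by
    nlinarith [mul_nonneg (sq_nonneg (A - 2 / 3)) (by linarith : 0 ≤ A + 4 / 3)]
  calc A * |w ^ 2 - z ^ 2| ≤ A * max (A ^ 2) (4 - 3 * A ^ 2) := by gcongr
    _ = max (A * A ^ 2) (A * (4 - 3 * A ^ 2)) := mul_max_of_nonneg _ _ hA
    _ ≤ 16 / 9 := max_le hcube hcubic

variable {p q : ℤ}

lemma abs_mul_nint_mul_nint_le (hp : p ≠ 0) (hq : q ≠ 0) (hs : 0 < s) {n a b : ℤ}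
    (hnab : n * round (p * α + q * β) = p * a + q * b)
    (h : nint (p * α + q * β) * (|(p : ℝ)| * |(q : ℝ)| * s ^ 2) ≤ 1)
    (hshort : (s * (p * (n * α - a) - q * (n * β - b))) ^ 2 +
      3 * (|(n : ℝ)| / (|(p : ℝ)| * |(q : ℝ)| * s)) ^ 2 ≤ 4) :
    |(n : ℝ)| * (nint (n * α) * nint (n * β)) * s ≤ 4 / 9 := by
  set T := |(p : ℝ)| * |(q : ℝ)|
  have hT0 : 0 < T := by positivity
  set X := n * α - a
  set Y := n * β - b
  have hsum : p * X + q * Y = n * (p * α + q * β - round (p * α + q * β)) := by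
    have : (n * round (p * α + q * β) : ℝ) = p * a + q * b := by exact_mod_cast hnab
    linear_combination this
  have hsmall : |s * (p * X + q * Y)| ≤ |(n : ℝ)| / (T * s) := by
    rw [hsum, abs_mul, abs_mul, abs_of_pos hs, le_div_iff₀ (by positivity)]
    calc s * (|(n : ℝ)| * nint (p * α + q * β)) * (T * s)
        = |(n : ℝ)| * (nint (p * α + q * β) * (T * s ^ 2)) := by ring
      _ ≤ |(n : ℝ)| := mul_le_of_le_one_right (abs_nonneg _) h
  have hpolar : |(s * (p * X + q * Y)) ^ 2 - (s * (p * X - q * Y)) ^ 2|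
      = 4 * s ^ 2 * T * (|X| * |Y|) := by
    rw [show (s * (p * X + q * Y)) ^ 2 - (s * (p * X - q * Y)) ^ 2
      = 4 * s ^ 2 * (p * q) * (X * Y) by ring, abs_mul, abs_mul (4 * s ^ 2),
      abs_mul (p : ℝ), abs_mul X, abs_of_pos (by positivity : 0 < 4 * s ^ 2)]
  have hprod : nint (n * α) * nint (n * β) ≤ |X| * |Y| :=
    mul_le_mul (round_le _ a) (round_le _ b) (nint_nonneg _) (abs_nonneg _)
  calc |(n : ℝ)| * (nint (n * α) * nint (n * β)) * s ≤ |(n : ℝ)| * (|X| * |Y|) * s := by gcongr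
    _ = |(n : ℝ)| / (T * s) * (4 * s ^ 2 * T * (|X| * |Y|)) / 4 := by field_simp
    _ ≤ 16 / 9 / 4 := by
        rw [← hpolar]
        gcongr
        exact mul_abs_sq_sub_sq_le (by positivity) hshort hsmall
    _ = 4 / 9 := by norm_num

lemma exists_short_vector_of_pos (α β : ℝ) (hp : p ≠ 0) (hq : q ≠ 0) (m : ℤ) (hs : 0 < s) :
    ∃ n a b : ℤ, (n, a, b) ≠ 0 ∧ n * m = p * a + q * b ∧
      (s * (p * (n * α - a) - q * (n * β - b))) ^ 2 +
        3 * (|(n : ℝ)| / (|(p : ℝ)| * |(q : ℝ)| * s)) ^ 2 ≤ 4 := by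
  set T := |(p : ℝ)| * |(q : ℝ)| with hT
  have hT0 : 0 < T := by positivity
  have hdet : p * (s * q) - q * (-(s * p)) = 2 * s * (p * q) := by ring
  obtain ⟨n, a, b, hne, hnab, hle⟩ := exists_short_vector_of_mul_eq p q m
    (s * (p * α - q * β)) (-(s * p)) (s * q) (√3 / (T * s)) (by positivity)
    (by rw [hdet]; positivity)
  refine ⟨n, a, b, hne, hnab, ?_⟩
  have hbound : |√3 / (T * s) * (2 * s * (p * q))| = 2 * √3 := by
    rw [abs_mul, abs_mul, abs_mul (p : ℝ), ← hT, abs_of_pos (by positivity : 0 < √3 / (T * s)),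
      abs_of_pos (by positivity : 0 < 2 * s)]
    field_simp
  rw [hdet, hbound, show (2 : ℝ) * (2 * √3) = √3 * 4 by ring,
    mul_le_mul_iff_right₀ (by positivity)] at hle
  refine le_of_eq_of_le ?_ hle
  simp only [mul_pow, div_pow, sq_abs, Real.sq_sqrt (zero_le_three (α := ℝ))]
  ring

/-- If `n = 0`, then `p X = -q Y = -p a`, so a nonzero vector has length at least `2 s`. -/
lemma ne_zero_of_short_vector (hp : p ≠ 0) (hq : q ≠ 0) (hs : 1 < s) {n a b m : ℤ}
    (hne : (n, a, b) ≠ 0) (hnab : n * m = p * a + q * b)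
    (hshort : (s * (p * (n * α - a) - q * (n * β - b))) ^ 2 ≤ 4) : n ≠ 0 := by
  rintro rfl
  have hpa : q * b = -(p * a) := by linarith
  have ha : a ≠ 0 := by
    rintro rfl
    simp_all
  have hpa1 : 1 ≤ |((p * a : ℤ) : ℝ)| := by
    exact_mod_cast Int.one_le_abs (mul_ne_zero hp ha)
  have hpaR : (q * b : ℝ) = -(p * a : ℤ) := by exact_mod_cast hpa
  have heq : s * (p * ((0 : ℤ) * α - a) - q * ((0 : ℤ) * β - b)) = -(2 * (s * (p * a : ℤ))) := by
    push_cast at hpaR ⊢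
    linear_combination s * hpaR
  have hlong : 1 < |s * (p * a : ℤ)| := by
    rw [abs_mul, abs_of_pos (one_pos.trans hs)]
    exact one_lt_mul_of_lt_of_le hs hpa1
  rw [heq, neg_sq, mul_pow] at hshort
  linarith [one_lt_sq_iff_one_lt_abs _ |>.mpr hlong]

lemma exists_isLittlewoodWitness_of_ne_zero (hp : p ≠ 0) (hq : q ≠ 0) (hs : 1 < s)
    (h : nint (p * α + q * β) * (|(p : ℝ)| * |(q : ℝ)| * s ^ 2) ≤ 1) :
    ∃ n, IsLittlewoodWitness α β (|(p : ℝ)| * |(q : ℝ)|) s n := by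
  have hs0 : 0 < s := one_pos.trans hs
  obtain ⟨n, a, b, hne, hnab, hshort⟩ :=
    exists_short_vector_of_pos α β hp hq (round (p * α + q * β)) hs0
  have hn : n ≠ 0 := ne_zero_of_short_vector hp hq hs hne hnab
    ((le_add_of_nonneg_right (by positivity)).trans hshort)
  have hcast : (n.natAbs : ℝ) = |(n : ℝ)| := by rw [Nat.cast_natAbs, Int.cast_abs]
  refine ⟨n.natAbs, Int.natAbs_pos.mpr hn, ?_, ?_⟩
  · have hA : √3 * (|(n : ℝ)| / (|(p : ℝ)| * |(q : ℝ)| * s)) ≤ 2 := by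
      refine le_of_sq_le_sq ?_ zero_le_two
      rw [mul_pow, Real.sq_sqrt zero_le_three]
      linarith [sq_nonneg (s * (p * (n * α - a) - q * (n * β - b)))]
    rwa [← mul_div_assoc, div_le_iff₀ (by positivity), ← hcast] at hA
  · rw [littlewoodProduct_natAbs, hcast]
    exact abs_mul_nint_mul_nint_le hp hq hs0 hnab h hshort

lemma isLittlewoodWitness_natAbs (hq : q ≠ 0) (hs : 9 / 8 ≤ s)
    (h : nint (q * β) * (|(q : ℝ)| * s ^ 2) ≤ 1) :
    IsLittlewoodWitness α β |(q : ℝ)| s q.natAbs := by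
  have : 0 < s := by linarith
  have hcast : (q.natAbs : ℝ) = |(q : ℝ)| := by rw [Nat.cast_natAbs, Int.cast_abs]
  refine ⟨Int.natAbs_pos.mpr hq, ?_, ?_⟩
  · have hsqrt : √3 ≤ 2 * s := by
      rw [Real.sqrt_le_left (by positivity)]
      nlinarith
    rw [hcast]
    linarith [mul_le_mul_of_nonneg_right hsqrt (abs_nonneg (q : ℝ))]
  · have hα : nint (q * α) ≤ 1 / 2 := abs_sub_round _
    have hβ0 := nint_nonneg (q * β)
    rw [littlewoodProduct_natAbs, hcast]
    calc |(q : ℝ)| * (nint (q * α) * nint (q * β)) * s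
        ≤ |(q : ℝ)| * (1 / 2 * nint (q * β)) * s := by gcongr
      _ = nint (q * β) * (|(q : ℝ)| * s ^ 2) / (2 * s) := by field_simp
      _ ≤ 1 / (2 * (9 / 8)) := by gcongr
      _ = 4 / 9 := by norm_num

/-- The multiplicative height of an integer pair, written `t²` in the theorem. -/
def pairHeight (pq : ℤ × ℤ) : ℝ := max 1 |(pq.1 : ℝ)| * max 1 |(pq.2 : ℝ)|

lemma one_le_pairHeight (pq : ℤ × ℤ) : 1 ≤ pairHeight pq :=
  one_le_mul_of_one_le_of_one_le (le_max_left _ _) (le_max_left _ _)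

lemma tendsto_pairHeight_cofinite : Tendsto pairHeight cofinite atTop := by
  rw [← cocompact_eq_cofinite]
  refine tendsto_atTop_mono (fun pq ↦ ?_) (tendsto_norm_cocompact_atTop (E := ℤ × ℤ))
  refine max_le ?_ ?_
  · exact (le_max_right _ _).trans
      (le_mul_of_one_le_right (by positivity) (le_max_left 1 |(pq.2 : ℝ)|))
  · exact (le_max_right _ _).trans
      (le_mul_of_one_le_left (by positivity) (le_max_left 1 |(pq.1 : ℝ)|))

lemma exists_isLittlewoodWitness (hpq : (p, q) ≠ 0) (hs : 9 / 8 ≤ s)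
    (h : nint (p * α + q * β) * (pairHeight (p, q) * s ^ 2) ≤ 1) :
    ∃ n, IsLittlewoodWitness α β (pairHeight (p, q)) s n := by
  have hmax {r : ℤ} (hr : r ≠ 0) : max 1 |(r : ℝ)| = |(r : ℝ)| :=
    max_eq_right (by exact_mod_cast Int.one_le_abs hr)
  rcases eq_or_ne p 0 with rfl | hp
  · have hq : q ≠ 0 := by simpa using hpq
    have hH : pairHeight (0, q) = |(q : ℝ)| := by simp [pairHeight, hmax hq]
    rw [hH] at h ⊢
    exact ⟨_, isLittlewoodWitness_natAbs hq hs (by simpa using h)⟩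
  rcases eq_or_ne q 0 with rfl | hq
  · have hH : pairHeight (p, 0) = |(p : ℝ)| := by simp [pairHeight, hmax hp]
    rw [hH] at h ⊢
    exact ⟨_, (isLittlewoodWitness_natAbs hp hs (by simpa using h)).swap⟩
  · have hH : pairHeight (p, q) = |(p : ℝ)| * |(q : ℝ)| := by
      rw [pairHeight, hmax hp, hmax hq]
    rw [hH] at h ⊢
    exact exists_isLittlewoodWitness_of_ne_zero hp hq (by linarith) h

end Transference

section TransferScale

lemma tendsto_sqrt_log_one_add_atTop : Tendsto (fun t : ℝ ↦ √(Real.log (1 + t))) atTop atTop :=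
  Real.tendsto_sqrt_atTop.comp
    (Real.tendsto_log_atTop.comp (tendsto_atTop_add_const_left _ 1 tendsto_id))

/-- The function `t ↦ c t² √(log (1 + t))` with `c = √3 / 2`, whose inverse is `ρ`. -/
def transferScale (t : ℝ) : ℝ := √3 / 2 * t ^ 2 * √(Real.log (1 + t))

lemma transferScale_pos {t : ℝ} (ht : 0 < t) : 0 < transferScale t := by
  have : 0 < Real.log (1 + t) := Real.log_pos (by linarith)
  unfold transferScale
  positivity

lemma monotoneOn_transferScale : MonotoneOn transferScale (Set.Ici 0) := by
  intro x (hx : 0 ≤ x) y _ hxy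
  unfold transferScale
  gcongr

lemma four_mul_transferScale_le {t : ℝ} (ht : 0 ≤ t) :
    4 * transferScale t ≤ transferScale (2 * t) := by
  calc 4 * transferScale t = √3 / 2 * (2 * t) ^ 2 * √(Real.log (1 + t)) := by
        rw [transferScale]; ring
    _ ≤ transferScale (2 * t) := by
        unfold transferScale
        gcongr
        linarith

lemma exists_transferScale_eq {y : ℝ} (hy : 0 < y) : ∃ t, 0 < t ∧ transferScale t = y := by
  have hcont : ContinuousOn transferScale (Set.Ici 0) := by
    refine ContinuousOn.mul (by fun_prop) (ContinuousOn.sqrt ?_)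
    exact ContinuousOn.log (by fun_prop) fun t (ht : 0 ≤ t) ↦ by positivity
  have htop : Tendsto transferScale atTop atTop :=
    ((tendsto_pow_atTop two_ne_zero).const_mul_atTop (by positivity)).atTop_mul_atTop₀
      tendsto_sqrt_log_one_add_atTop
  have hzero : transferScale 0 = 0 := by simp [transferScale]
  obtain ⟨t, ht, rfl⟩ := isPreconnected_Ici.intermediate_value_Ici Set.self_mem_Ici
    (le_principal_iff.mpr (Ici_mem_atTop 0)) hcont htop (hzero.trans_le hy.le)
  exact ⟨t, (ht : 0 ≤ t).lt_of_ne (by rintro rfl; exact hy.ne' hzero), rfl⟩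

lemma sqrt_log_one_add_le {t R : ℝ} (hR : -1 < R) (h : R ≤ 2 * t) :
    √(Real.log (1 + R)) ≤ √2 * √(Real.log (1 + t)) := by
  rw [← Real.sqrt_mul zero_le_two]
  refine Real.sqrt_le_sqrt ?_
  calc Real.log (1 + R) ≤ Real.log ((1 + t) ^ 2) :=
        Real.log_le_log (by linarith) (by linarith [sq_nonneg t])
    _ = 2 * Real.log (1 + t) := by rw [Real.log_pow, Nat.cast_ofNat]

lemma IsLittlewoodWitness.littlewoodProduct_le {α β t R : ℝ} {n : ℕ} (ht : 0 < t) (hR : 0 < R)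
    (h : IsLittlewoodWitness α β (t ^ 2) (√(Real.log (1 + t))) n) (hRn : transferScale R = n) :
    littlewoodProduct α β n ≤ (√3 / 2) ^ 2 / (R ^ 2 * Real.log (1 + R)) := by
  have hlog : 0 < Real.log (1 + R) := Real.log_pos (by linarith)
  have hw := littlewoodProduct_nonneg α β n
  have h3 : √3 ^ 2 = 3 := Real.sq_sqrt zero_le_three
  have hRt : R ≤ 2 * t := by
    by_contra! hlt
    have hn : n ≤ 4 / 3 * transferScale t := by
      have := mul_le_mul_of_nonneg_left h.sqrt_three_mul_le (Real.sqrt_nonneg 3)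
      rw [transferScale]
      linear_combination this / 3 - n / 3 * h3
    have := monotoneOn_transferScale (by simpa using ht.le) (by simpa using hR.le) hlt.le
    linarith [four_mul_transferScale_le ht.le, transferScale_pos ht]
  have hconst : √2 * (4 / 9) ≤ (√3 / 2) ^ 3 := by
    refine le_of_sq_le_sq ?_ (by positivity)
    have : (√3 ^ 2) ^ 3 = 27 := by rw [h3]; norm_num
    have : √2 ^ 2 = 2 := Real.sq_sqrt zero_le_two
    nlinarith
  rw [le_div_iff₀ (by positivity)]
  refine le_of_mul_le_mul_left ?_ (by positivity : 0 < √3 / 2)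
  calc √3 / 2 * (littlewoodProduct α β n * (R ^ 2 * Real.log (1 + R)))
      = n * littlewoodProduct α β n * √(Real.log (1 + R)) := by
        rw [← hRn, transferScale]
        linear_combination (-(√3 / 2 * R ^ 2 * littlewoodProduct α β n)) * Real.sq_sqrt hlog.le
    _ ≤ n * littlewoodProduct α β n * (√2 * √(Real.log (1 + t))) := by
        gcongr
        exact sqrt_log_one_add_le (by linarith) hRt
    _ = √2 * (n * littlewoodProduct α β n * √(Real.log (1 + t))) := by ring
    _ ≤ √2 * (4 / 9) := by gcongr; exact h.mul_littlewoodProduct_le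
    _ ≤ √3 / 2 * (√3 / 2) ^ 2 := by rwa [← pow_succ']

end TransferScale

/-- Log-sensitive transference for the Littlewood setting, opposite direction.
Here ρ is the inverse of t ↦ c·t²·√(log(1+t)) on the positive reals, c = √3/2. -/
theorem littlewood_log_transfer_back (α β : ℝ) (ρ : ℝ → ℝ)
    (hρ₁ : ∀ t, 0 < t → ρ (Real.sqrt 3 / 2 * t ^ 2 * Real.sqrt (Real.log (1 + t))) = t)
    (hρ₂ : ∀ t, 0 < t → Real.sqrt 3 / 2 * ρ t ^ 2 * Real.sqrt (Real.log (1 + ρ t)) = t)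
    (h : {pq : ℤ × ℤ | pq ≠ 0 ∧ ∃ t : ℝ,
      t = Real.sqrt (max 1 |(pq.1 : ℝ)| * max 1 |(pq.2 : ℝ)|) ∧
      nint (pq.1 * α + pq.2 * β) ≤ 1 / (t ^ 2 * Real.log (1 + t))}.Infinite) :
    {q : ℕ | 0 < q ∧ nint (q * α) * nint (q * β) ≤
      (Real.sqrt 3 / 2) ^ 2 / (ρ q ^ 2 * Real.log (1 + ρ q))}.Infinite := by
  have hρ {n : ℕ} (hn : 0 < n) : 0 < ρ n := by
    obtain ⟨t, ht, hnt⟩ := exists_transferScale_eq (Nat.cast_pos.mpr hn)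
    rwa [← hnt, transferScale, hρ₁ t ht]
  refine infinite_setOf_littlewoodProduct_le (fun n hn ↦ ?_) fun ε hε ↦ ?_
  · have := Real.log_nonneg (le_add_of_nonneg_right (hρ hn).le)
    positivity
  have hlim := (tendsto_sqrt_log_one_add_atTop.comp Real.tendsto_sqrt_atTop).comp
    tendsto_pairHeight_cofinite
  obtain ⟨⟨p, q⟩, ⟨hpq, t, ht, hle⟩, hs⟩ := ((frequently_cofinite_iff_infinite.mpr h).and_eventually
    (hlim.eventually_gt_atTop (max (9 / 8) (1 / ε)))).exists
  change t = √(pairHeight (p, q)) at ht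
  have hH : 0 < pairHeight (p, q) := one_pos.trans_le (one_le_pairHeight _)
  have ht0 : 0 < t := ht ▸ Real.sqrt_pos.mpr hH
  have htH : pairHeight (p, q) = t ^ 2 := by rw [ht, Real.sq_sqrt hH.le]
  have hlog : 0 < Real.log (1 + t) := Real.log_pos (by linarith)
  simp only [Function.comp_apply, ← ht, max_lt_iff] at hs
  obtain ⟨n, hn⟩ := exists_isLittlewoodWitness hpq hs.1.le
    (by rwa [Real.sq_sqrt hlog.le, htH, ← le_div_iff₀ (by positivity)])
  exact ⟨n, hn.pos, (htH ▸ hn).littlewoodProduct_le ht0 (hρ hn.pos)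
    (hρ₂ n (Nat.cast_pos.mpr hn.pos)), hn.littlewoodProduct_lt hε hs.2⟩
end
end
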